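/- For any n × m matrices A, B with complex entries, per(A B*) = ⟨f_A, f_B⟩, where B* is the conjugate transpose of B, f_A = ∏_{i=1}^n (Σ_{j=1}^m a_{ij} x_j), f_B = ∏_{i=1}^n (Σ_{j=1}^m b_{ij} x_j), and ⟨·,·⟩ is the inner product on homogeneous polynomials of degree n in ℂ[x_1,…,x_m] defined by ⟨f,g⟩ = Σ_{K : {1,…,m} → ℕ, Σ K = n} K! · coe(x^K, f) · conj(coe(x^K, g)). -/

import Mathlib

/-!
Expanding the rows of `A * Bᴴ` over the functions `φ` that choose a column in each row gives
`per (A * Bᴴ) = ∑ φ, (∏ i, A i (φ i)) * conj (per B_φ)`, where `B_φ` has the columns of `B` selected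
by `φ`. If `K` counts how often each column is selected, then `φ ∘ σ`, for `σ` a permutation of the
rows, runs `K!` times through each function with the same counts, so
`per B_φ = K! * coe(x^K, f_B)`. Since `f_A = ∑ φ, (∏ i, A i (φ i)) x^K`, the sum over `φ` is the
inner product of `f_A` and `f_B`.
-/

open scoped BigOperators

/-- The permanent of a square complex matrix. -/
noncomputable def permanent {ι : Type*} [Fintype ι] [DecidableEq ι] (M : Matrix ι ι ℂ) : ℂ :=
  ∑ σ : Equiv.Perm ι, ∏ i, M i (σ i)

/-- The polynomial `f_A = ∏_{i=1}^n (Σ_{j=1}^m a_{ij} x_j)` associated to an `n × m`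
complex matrix `A`. -/
noncomputable def FPoly {n m : ℕ} (A : Matrix (Fin n) (Fin m) ℂ) : MvPolynomial (Fin m) ℂ :=
  ∏ i : Fin n, ∑ j : Fin m, MvPolynomial.C (A i j) * MvPolynomial.X j

/-- The inner product `⟨f,g⟩ = Σ_{K : sum K = n} K! ⋅ coe(x^K, f) ⋅ conj(coe(x^K, g))` on
(homogeneous degree-`n`) polynomials in `ℂ[x_j : j ∈ ι]`; the sum runs over all
`K : ι → ℕ` with `Σ_j K j = n` (all such `K` satisfy `K j ≤ n` for every `j`). -/
noncomputable def polyInner {ι : Type*} [Fintype ι] [DecidableEq ι] (n : ℕ)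
    (f g : MvPolynomial ι ℂ) : ℂ :=
  ∑ K ∈ (Fintype.piFinset fun _ : ι => Finset.range (n + 1)).filter
      (fun K => ∑ j, K j = n),
    (∏ j, ((K j).factorial : ℂ))
      * MvPolynomial.coeff (Finsupp.equivFunOnFinite.symm K) f
      * (starRingEnd ℂ) (MvPolynomial.coeff (Finsupp.equivFunOnFinite.symm K) g)

open Finset MvPolynomial
open scoped Matrix

/-- The factorial `K! = ∏ j, (K j)!` of an exponent vector `K`. -/
def multiFactorial {κ : Type*} (K : κ →₀ ℕ) : ℕ :=
  K.prod fun _ k => k.factorial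

section FiberCount

variable {ι κ : Type*} [Fintype ι]

/-- The function `K` sending `j` to the size of the fiber of `φ` over `j`, written as a sum so that
`∏ i, x_{φ i} = x^K`. -/
noncomputable def fiberCount (φ : ι → κ) : κ →₀ ℕ :=
  ∑ i, Finsupp.single (φ i) 1

theorem fiberCount_apply [DecidableEq κ] (φ : ι → κ) (j : κ) :
    fiberCount φ j = Fintype.card {i // φ i = j} := by
  simp [fiberCount, Finsupp.finsetSum_apply, Finsupp.single_apply, Fintype.card_subtype]

theorem fiberCount_comp_perm (φ : ι → κ) (σ : Equiv.Perm ι) :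
    fiberCount (φ ∘ σ) = fiberCount φ :=
  Equiv.sum_comp σ fun i => Finsupp.single (φ i) 1

theorem exists_comp_perm_eq_iff {φ ψ : ι → κ} :
    (∃ σ : Equiv.Perm ι, φ ∘ σ = ψ) ↔ fiberCount ψ = fiberCount φ := by
  classical
  constructor
  · rintro ⟨σ, rfl⟩
    exact fiberCount_comp_perm φ σ
  · intro h
    have fiberEquiv (j : κ) : Nonempty ({i // ψ i = j} ≃ {i // φ i = j}) := by
      rw [← Fintype.card_eq, ← fiberCount_apply ψ, ← fiberCount_apply φ, h]
    exact ⟨Equiv.ofFiberEquiv fun j => (fiberEquiv j).some,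
      funext fun i => Equiv.ofFiberEquiv_map _ i⟩

theorem card_comp_perm_eq_self [DecidableEq ι] [DecidableEq κ] (φ : ι → κ) :
    #{σ : Equiv.Perm ι | φ ∘ σ = φ} = multiFactorial (fiberCount φ) := by
  rw [← Fintype.card_subtype, DomMulAct.stabilizer_card']
  simp_rw [← fiberCount_apply]
  have hsupp : (fiberCount φ).support ⊆ univ.image φ := fun j hj => by
    simpa [fiberCount, Finsupp.finsetSum_apply, Finsupp.single_apply] using hj
  exact (Finsupp.prod_of_support_subset _ hsupp _ fun _ _ => Nat.factorial_zero).symm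

theorem card_comp_perm_eq [DecidableEq ι] [DecidableEq κ] (φ ψ : ι → κ) :
    #{σ : Equiv.Perm ι | φ ∘ σ = ψ} =
      if fiberCount ψ = fiberCount φ then multiFactorial (fiberCount φ) else 0 := by
  split_ifs with h
  · obtain ⟨τ, rfl⟩ := exists_comp_perm_eq_iff.2 h
    rw [← card_comp_perm_eq_self]
    refine card_equiv (Equiv.mulRight τ⁻¹) fun σ => ?_
    simp only [mem_filter_univ, Equiv.coe_mulRight, Equiv.Perm.coe_mul, ← Function.comp_assoc]
    exact (Equiv.comp_symm_eq τ φ (φ ∘ σ)).symm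
  · rw [card_filter_eq_zero_iff]
    exact fun σ _ hσ => h (exists_comp_perm_eq_iff.1 ⟨σ, hσ⟩)

end FiberCount

section Fischer

variable {κ R : Type*} [CommSemiring R] [Star R]

/-- The Fischer inner product `∑ K, K! * coe(x^K, f) * star coe(x^K, g)` of polynomials in any set
of variables, without restriction to a single degree. -/
noncomputable def fischerInner (f g : MvPolynomial κ R) : R :=
  ∑ K ∈ f.support, (multiFactorial K : R) * coeff K f * star (coeff K g)

theorem fischerInner_eq_sum_of_support_subset {f : MvPolynomial κ R} {s : Finset (κ →₀ ℕ)}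
    (hs : f.support ⊆ s) (g : MvPolynomial κ R) :
    fischerInner f g = ∑ K ∈ s, (multiFactorial K : R) * coeff K f * star (coeff K g) :=
  sum_subset hs fun K _ hK => by simp [notMem_support_iff.1 hK]

theorem fischerInner_monomial (K : κ →₀ ℕ) (a : R) (g : MvPolynomial κ R) :
    fischerInner (monomial K a) g = (multiFactorial K : R) * a * star (coeff K g) := by
  classical
  rw [fischerInner_eq_sum_of_support_subset support_monomial_subset, sum_singleton,
    coeff_monomial, if_pos rfl]

theorem fischerInner_sum {α : Type*} (s : Finset α) (f : α → MvPolynomial κ R)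
    (g : MvPolynomial κ R) :
    fischerInner (∑ i ∈ s, f i) g = ∑ i ∈ s, fischerInner (f i) g := by
  classical
  have hsub (i) (hi : i ∈ s) : (f i).support ⊆ s.biUnion fun i => (f i).support :=
    subset_biUnion_of_mem (fun i => (f i).support) hi
  rw [fischerInner_eq_sum_of_support_subset support_sum]
  simp only [coeff_sum, mul_sum, sum_mul]
  rw [sum_comm]
  exact sum_congr rfl fun i hi => (fischerInner_eq_sum_of_support_subset (hsub i hi) g).symm

end Fischer

section ProdRowForms

variable {ι κ R : Type*} [Fintype ι] [Fintype κ] [CommSemiring R]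

/-- The product `f_A` of the linear forms whose coefficients are the rows of `A`. -/
noncomputable def prodRowForms (A : Matrix ι κ R) : MvPolynomial κ R :=
  ∏ i, ∑ j, C (A i j) * X j

theorem prodRowForms_isHomogeneous (A : Matrix ι κ R) :
    (prodRowForms A).IsHomogeneous (Fintype.card ι) := by
  rw [Fintype.card_eq_sum_ones]
  exact .prod _ _ _ fun i _ => .sum _ _ _ fun j _ => isHomogeneous_C_mul_X (A i j) j

theorem prodRowForms_eq_sum_monomial [DecidableEq ι] (A : Matrix ι κ R) :
    prodRowForms A = ∑ φ : ι → κ, monomial (fiberCount φ) (∏ i, A i (φ i)) := by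
  simp_rw [prodRowForms, Fintype.prod_sum, fiberCount, monomial_sum_prod, C_mul_X_eq_monomial]

theorem coeff_prodRowForms [DecidableEq ι] [DecidableEq κ] (A : Matrix ι κ R) (K : κ →₀ ℕ) :
    coeff K (prodRowForms A) = ∑ φ : ι → κ with fiberCount φ = K, ∏ i, A i (φ i) := by
  simp_rw [prodRowForms_eq_sum_monomial, coeff_sum, coeff_monomial, sum_filter]

end ProdRowForms

section Permanent

variable {ι κ R : Type*} [Fintype ι] [DecidableEq ι] [CommSemiring R]

theorem matrix_permanent_eq_sum_prod (M : Matrix ι ι R) :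
    M.permanent = ∑ σ : Equiv.Perm ι, ∏ i, M i (σ i) := by
  rw [← Matrix.permanent_transpose]
  rfl

theorem matrix_permanent_conjTranspose [StarRing R] (M : Matrix ι ι R) :
    Mᴴ.permanent = star M.permanent := by
  rw [matrix_permanent_eq_sum_prod]
  simp [Matrix.permanent, star_sum, star_prod]

variable [Fintype κ]

theorem matrix_permanent_mul (A : Matrix ι κ R) (B : Matrix κ ι R) :
    (A * B).permanent = ∑ φ : ι → κ, (∏ i, A i (φ i)) * (B.submatrix φ id).permanent := by
  simp_rw [matrix_permanent_eq_sum_prod, Matrix.mul_apply, Fintype.prod_sum, prod_mul_distrib,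
    mul_sum]
  exact sum_comm

theorem matrix_permanent_submatrix_eq_coeff (B : Matrix ι κ R) (φ : ι → κ) :
    (B.submatrix id φ).permanent =
      (multiFactorial (fiberCount φ) : R) * coeff (fiberCount φ) (prodRowForms B) := by
  classical
  calc (B.submatrix id φ).permanent
    _ = ∑ σ : Equiv.Perm ι, ∏ i, B i ((φ ∘ σ) i) := matrix_permanent_eq_sum_prod _
    _ = ∑ ψ : ι → κ, #{σ : Equiv.Perm ι | φ ∘ σ = ψ} • ∏ i, B i (ψ i) := by
      rw [← sum_fiberwise' univ (fun σ : Equiv.Perm ι => φ ∘ σ) fun ψ => ∏ i, B i (ψ i)]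
      simp_rw [sum_const]
    _ = (multiFactorial (fiberCount φ) : R) * coeff (fiberCount φ) (prodRowForms B) := by
      simp [card_comp_perm_eq, coeff_prodRowForms, sum_filter, mul_sum, ite_smul]

theorem permanent_mul_conjTranspose_eq_inner_general [StarRing R] (A B : Matrix ι κ R) :
    (A * Bᴴ).permanent = fischerInner (prodRowForms A) (prodRowForms B) := by
  rw [matrix_permanent_mul, prodRowForms_eq_sum_monomial A, fischerInner_sum]
  refine sum_congr rfl fun φ _ => ?_
  rw [← Matrix.conjTranspose_submatrix, matrix_permanent_conjTranspose,
    matrix_permanent_submatrix_eq_coeff, fischerInner_monomial, star_mul', star_natCast]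
  ring

end Permanent

theorem permanent_eq_matrix_permanent {ι : Type*} [Fintype ι] [DecidableEq ι] (M : Matrix ι ι ℂ) :
    permanent M = M.permanent :=
  (matrix_permanent_eq_sum_prod M).symm

theorem polyInner_eq_fischerInner {ι : Type*} [Fintype ι] [DecidableEq ι] {n : ℕ}
    {f : MvPolynomial ι ℂ} (hf : f.IsHomogeneous n) (g : MvPolynomial ι ℂ) :
    polyInner n f g = fischerInner f g := by
  have hsupp : f.support ⊆ univ.finsuppAntidiag n := fun K hK => by
    rw [mem_finsuppAntidiag, ← Finsupp.degree_eq_sum, Finsupp.degree_eq_weight_one]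
    exact ⟨hf (mem_support_iff.1 hK), subset_univ _⟩
  rw [fischerInner_eq_sum_of_support_subset hsupp, polyInner]
  refine sum_equiv Finsupp.equivFunOnFinite.symm (fun K => ?_) fun K _ => ?_
  · have hle (hK : ∑ j, K j = n) (j : ι) : K j ≤ n :=
      hK ▸ single_le_sum (fun _ _ => Nat.zero_le _) (mem_univ j)
    simpa using hle
  · simp [multiFactorial, Finsupp.prod_fintype]

theorem FPoly_eq_prodRowForms {n m : ℕ} (A : Matrix (Fin n) (Fin m) ℂ) :
    FPoly A = prodRowForms A :=
  rfl

theorem FPoly_isHomogeneous {n m : ℕ} (A : Matrix (Fin n) (Fin m) ℂ) :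
    (FPoly A).IsHomogeneous n := by
  simpa only [FPoly_eq_prodRowForms, Fintype.card_fin] using prodRowForms_isHomogeneous A

/-- For `n × m` complex matrices `A, B`, the permanent of `A Bᴴ` equals the inner product
`⟨f_A, f_B⟩`. -/
theorem permanent_mul_conjTranspose_eq_inner {n m : ℕ} (A B : Matrix (Fin n) (Fin m) ℂ) :
    permanent (A * B.conjTranspose) = polyInner n (FPoly A) (FPoly B) := by
  rw [permanent_eq_matrix_permanent, polyInner_eq_fischerInner (FPoly_isHomogeneous A),
    FPoly_eq_prodRowForms, FPoly_eq_prodRowForms, permanent_mul_conjTranspose_eq_inner_general]
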